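/- For every odd natural number n with n ≥ 3 and every z ∈ ℂ, Ĥ_n(z) = M₁(n)·ν_n(z), where M₁(n) = (−1)^{(n+1)/2}·n!·2^{(n+1)/2} / ((n−1)(n−2)·∏_{j=1}^{(n−3)/2}(n − 2(1+j) + 1)). -/

import Mathlib

/-- Physicists' Hermite polynomials via the Rodrigues formula (complex version). -/
noncomputable def Hc (n : ℕ) (z : ℂ) : ℂ :=
  (-1) ^ n * Complex.exp (z ^ 2) * iteratedDeriv n (fun t => Complex.exp (-t ^ 2)) z

/-- The function Ĥₙ. -/
noncomputable def Hhatc (n : ℕ) (z : ℂ) : ℂ :=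
  Hc n z + 4 * (n : ℂ) * Hc (n - 2) z + 4 * (n : ℂ) * ((n : ℂ) - 3) * Hc (n - 4) z

/-- Even coefficients c_{2k}(n) of the generalized power series. -/
noncomputable def ceven (n k : ℕ) : ℂ :=
  if k = 0 then 1
  else if k = 1 then -(n : ℂ)
  else (-1) ^ k * 2 ^ k * (n : ℂ) * ((n : ℂ) - ((2 * (k : ℂ) - 1) ^ 2 + 1)) *
    (∏ j ∈ Finset.Icc 1 (k - 2), ((n : ℂ) - 2 * (1 + (j : ℂ)))) /
      (Nat.factorial (2 * k) : ℂ)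

/-- Odd coefficients: `codd n k` is c_{2k-1}(n), for k ≥ 1. -/
noncomputable def codd (n k : ℕ) : ℂ :=
  if k ≤ 1 then 1
  else (-1) ^ (k + 1) * 2 ^ (k - 1) * ((n : ℂ) - ((2 * ((k : ℂ) - 1)) ^ 2 + 1)) *
    (∏ j ∈ Finset.Icc 1 (k - 2), ((n : ℂ) - (2 * (1 + (j : ℂ)) - 1))) /
      (Nat.factorial (2 * k - 1) : ℂ)

/-- μₙ(z) = Σ_{k≥0} c_{2k}(n)·z^{2k}. -/
noncomputable def muF (n : ℕ) (z : ℂ) : ℂ := ∑' k : ℕ, ceven n k * z ^ (2 * k)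

/-- νₙ(z) = Σ_{k≥1} c_{2k-1}(n)·z^{2k-1}. -/
noncomputable def nuF (n : ℕ) (z : ℂ) : ℂ := ∑' k : ℕ, codd n (k + 1) * z ^ (2 * k + 1)

/-- βₙ = μₙ + νₙ. -/
noncomputable def betaF (n : ℕ) (z : ℂ) : ℂ := muF n z + nuF n z

/-- The proportionality constant M₁(n). -/
noncomputable def M1 (n : ℕ) : ℂ :=
  (-1) ^ ((n + 1) / 2) * (Nat.factorial n : ℂ) * 2 ^ ((n + 1) / 2) /
    (((n : ℂ) - 1) * ((n : ℂ) - 2) *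
      ∏ j ∈ Finset.Icc 1 ((n - 3) / 2), ((n : ℂ) - 2 * (1 + (j : ℂ)) + 1))

/-!
Expanding a translate of the Gaussian by Leibniz' rule gives the Appell addition formula for the
Hermite polynomials; together with the values `H_j(0)` it yields the coefficient `a_p(k)` of
`z ^ (2 k + 1)` in `H_{2p+1}`. Consecutive ones are related by
`(p + 1 - k) a_{p+1}(k) = -2 (2p + 3) (p + 1) a_p(k)`, so for `n = 2m + 3` the three terms of `Ĥ_n`
collapse to the single multiple `(2k² - (m + 1)) / ((m + 1) (2m + 1)) · a_{m+1}(k)`. The quadratic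
factor is the exceptional factor `n - ((2k)² + 1) = -2 (2k² - (m + 1))` of `c_{2k+1}(n)`.
-/

open Finset Nat

lemma iteratedDeriv_succ_id_mul {𝕜 : Type*} [NontriviallyNormedField 𝕜] {f : 𝕜 → 𝕜} {x : 𝕜} {n : ℕ}
    (hf : ContDiffAt 𝕜 (n + 1 : ℕ) f x) :
    iteratedDeriv (n + 1) (fun t ↦ t * f t) x =
      x * iteratedDeriv (n + 1) f x + (n + 1) * iteratedDeriv n f x := by
  rw [iteratedDeriv_fun_mul contDiffAt_fun_id hf, sum_range_succ', sum_range_succ']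
  simp [iteratedDeriv_fun_id, add_comm]

lemma contDiff_cexp_neg_sq {n : WithTop ℕ∞} : ContDiff ℂ n fun t : ℂ ↦ Complex.exp (-t ^ 2) := by
  fun_prop

lemma deriv_cexp_neg_sq :
    deriv (fun t : ℂ ↦ Complex.exp (-t ^ 2)) = fun t ↦ -2 * (t * Complex.exp (-t ^ 2)) := by
  funext t
  have h : HasDerivAt (fun t : ℂ ↦ Complex.exp (-t ^ 2)) (Complex.exp (-t ^ 2) * -(2 * t)) t := by
    simpa using (hasDerivAt_pow 2 t).neg.cexp
  rw [h.deriv]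
  ring

lemma iteratedDeriv_add_two_cexp_neg_sq (n : ℕ) (z : ℂ) :
    iteratedDeriv (n + 2) (fun t ↦ Complex.exp (-t ^ 2)) z =
      -2 * (z * iteratedDeriv (n + 1) (fun t ↦ Complex.exp (-t ^ 2)) z +
        (n + 1) * iteratedDeriv n (fun t ↦ Complex.exp (-t ^ 2)) z) := by
  rw [iteratedDeriv_succ', deriv_cexp_neg_sq, iteratedDeriv_const_mul_field,
    iteratedDeriv_succ_id_mul contDiff_cexp_neg_sq.contDiffAt]

lemma iteratedDeriv_cexp_neg_sq_add (n : ℕ) (w z : ℂ) :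
    iteratedDeriv n (fun t ↦ Complex.exp (-t ^ 2)) (w + z) =
      Complex.exp (-z ^ 2) * ∑ i ∈ range (n + 1), n.choose i *
        ((-2 * z) ^ i * Complex.exp (-2 * z * w)) *
          iteratedDeriv (n - i) (fun t ↦ Complex.exp (-t ^ 2)) w := by
  have gaussian_translate : (fun t : ℂ ↦ Complex.exp (-(t + z) ^ 2)) = fun t ↦
      Complex.exp (-z ^ 2) * (Complex.exp (-2 * z * t) * Complex.exp (-t ^ 2)) := by
    funext t
    rw [← Complex.exp_add, ← Complex.exp_add]
    ring_nf
  have translate := congrFun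
    (iteratedDeriv_comp_add_const n (fun t : ℂ ↦ Complex.exp (-t ^ 2)) z) w
  rw [← translate, gaussian_translate, iteratedDeriv_const_mul_field,
    iteratedDeriv_fun_mul (by fun_prop) contDiff_cexp_neg_sq.contDiffAt]
  simp only [iteratedDeriv_cexp_const_mul]

lemma Hc_zero (z : ℂ) : Hc 0 z = 1 := by
  simp [Hc, ← Complex.exp_add]

lemma Hc_one (z : ℂ) : Hc 1 z = 2 * z := by
  have h : Complex.exp (z ^ 2) * Complex.exp (-z ^ 2) = 1 := by simp [← Complex.exp_add]
  rw [Hc, iteratedDeriv_one, deriv_cexp_neg_sq]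
  linear_combination 2 * z * h

lemma Hc_add_two (n : ℕ) (z : ℂ) :
    Hc (n + 2) z = 2 * z * Hc (n + 1) z - 2 * (n + 1) * Hc n z := by
  rw [Hc, Hc, Hc, iteratedDeriv_add_two_cexp_neg_sq]
  ring

lemma Hc_add (n : ℕ) (w z : ℂ) :
    Hc n (w + z) = ∑ i ∈ range (n + 1), n.choose i * (2 * z) ^ i * Hc (n - i) w := by
  have exp_factor : Complex.exp ((w + z) ^ 2) * Complex.exp (-z ^ 2) * Complex.exp (-2 * z * w) =
      Complex.exp (w ^ 2) := by
    rw [← Complex.exp_add, ← Complex.exp_add]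
    ring_nf
  rw [Hc, iteratedDeriv_cexp_neg_sq_add, mul_sum, mul_sum]
  refine sum_congr rfl fun i hi ↦ ?_
  have sign : (-1 : ℂ) ^ n * (-2 * z) ^ i = (-1) ^ (n - i) * (2 * z) ^ i := by
    rw [← Nat.sub_add_cancel (mem_range_succ_iff.mp hi), pow_add, mul_assoc, ← mul_pow]
    simp
  rw [Hc, ← exp_factor]
  linear_combination n.choose i * iteratedDeriv (n - i) (fun t ↦ Complex.exp (-t ^ 2)) w *
    Complex.exp ((w + z) ^ 2) * Complex.exp (-z ^ 2) * Complex.exp (-2 * z * w) * sign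

lemma Hc_odd_zero (q : ℕ) : Hc (2 * q + 1) 0 = 0 := by
  induction q with
  | zero => simp [Hc_one]
  | succ q ih => rw [show 2 * (q + 1) + 1 = 2 * q + 1 + 2 by ring, Hc_add_two, ih]; simp

lemma Hc_even_zero (q : ℕ) : Hc (2 * q) 0 = (-1) ^ q * (2 * q)! / q ! := by
  induction q with
  | zero => simp [Hc_zero]
  | succ q ih =>
    rw [show 2 * (q + 1) = 2 * q + 2 by ring, Hc_add_two, ih, factorial_succ (2 * q + 1),
      factorial_succ (2 * q), factorial_succ q]
    push_cast
    field_simp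
    ring

lemma hasSum_Hc (n : ℕ) (z : ℂ) :
    HasSum (fun i ↦ n.choose i * (2 * z) ^ i * Hc (n - i) 0) (Hc n z) := by
  have vanishes_above (i : ℕ) (hi : i ∉ range (n + 1)) :
      n.choose i * (2 * z) ^ i * Hc (n - i) 0 = 0 := by
    simp [choose_eq_zero_of_lt (not_lt.mp (mem_range.not.mp hi))]
  have addition_at_zero := Hc_add n 0 z
  rw [zero_add] at addition_at_zero
  rw [addition_at_zero]
  exact hasSum_sum_of_ne_finset_zero vanishes_above

/-- The coefficient of `z ^ (2 * k + 1)` in the Hermite polynomial `H_{2p+1}`. Writing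
`p.descFactorial k` instead of `p ! / (p - k)!` makes it vanish for `k > p`, so that the formula is
valid for all `k`. -/
noncomputable def hermiteOddCoeff (p k : ℕ) : ℂ :=
  (-1) ^ (p + k) * 2 ^ (2 * k + 1) * (2 * p + 1)! * p.descFactorial k / (p ! * (2 * k + 1)!)

lemma choose_mul_Hc_zero_eq_hermiteOddCoeff (p k : ℕ) :
    (2 * p + 1).choose (2 * k + 1) * 2 ^ (2 * k + 1) * Hc (2 * p + 1 - (2 * k + 1)) 0 =
      hermiteOddCoeff p k := by
  rcases lt_or_ge p k with hpk | hkp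
  · simp [hermiteOddCoeff, choose_eq_zero_of_lt (show 2 * p + 1 < 2 * k + 1 by lia),
      descFactorial_of_lt hpk]
  · obtain ⟨q, rfl⟩ := exists_add_of_le hkp
    have descFactorial_eq : (q ! : ℂ) * (k + q).descFactorial k = (k + q)! := by
      have h := factorial_mul_descFactorial hkp
      rw [Nat.add_sub_cancel_left] at h
      exact_mod_cast h
    rw [show 2 * (k + q) + 1 = (2 * k + 1) + 2 * q by ring, cast_add_choose,
      Nat.add_sub_cancel_left, Hc_even_zero, hermiteOddCoeff]
    have sign : (-1 : ℂ) ^ (k + q + k) = (-1) ^ q := by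
      rw [add_right_comm, pow_add, (Even.add_self k).neg_one_pow, one_mul]
    rw [sign, ← descFactorial_eq, show 2 * (k + q) + 1 = (2 * k + 1) + 2 * q by ring]
    have hD : ((k + q).descFactorial k : ℂ) ≠ 0 := by
      simp [descFactorial_eq_zero_iff_lt]
    have hq : ((2 * q)! : ℂ) ≠ 0 := by
      exact_mod_cast (2 * q).factorial_ne_zero
    field_simp

lemma hasSum_Hc_odd (p : ℕ) (z : ℂ) :
    HasSum (fun k ↦ hermiteOddCoeff p k * z ^ (2 * k + 1)) (Hc (2 * p + 1) z) := by
  have odd_injective : Function.Injective fun k : ℕ ↦ 2 * k + 1 := fun a b h ↦ by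
    simpa using h
  have even_vanishes (i : ℕ) (hi : i ∉ Set.range fun k : ℕ ↦ 2 * k + 1) :
      (2 * p + 1).choose i * (2 * z) ^ i * Hc (2 * p + 1 - i) 0 = 0 := by
    obtain ⟨a, rfl⟩ : Even i := by
      rw [← not_odd_iff_even]
      rintro ⟨k, rfl⟩
      exact hi ⟨k, rfl⟩
    rcases le_or_gt a p with ha | ha
    · rw [show 2 * p + 1 - (a + a) = 2 * (p - a) + 1 by lia, Hc_odd_zero, mul_zero]
    · simp [choose_eq_zero_of_lt (show 2 * p + 1 < a + a by lia)]
  convert (odd_injective.hasSum_iff even_vanishes).mpr (hasSum_Hc (2 * p + 1) z) using 2 with k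
  rw [← choose_mul_Hc_zero_eq_hermiteOddCoeff, Function.comp_apply]
  ring

lemma cast_succ_sub_mul_descFactorial {R : Type*} [CommRing R] (n k : ℕ) :
    ((n : R) + 1 - k) * (n + 1).descFactorial k = (n + 1) * n.descFactorial k := by
  rcases le_or_gt k (n + 1) with hk | hk
  · have h := congrArg (Nat.cast : ℕ → R) (succ_descFactorial n k)
    push_cast [hk] at h
    exact h
  · simp [descFactorial_of_lt hk, descFactorial_of_lt (show n < k by lia)]

lemma succ_sub_mul_hermiteOddCoeff_succ (p k : ℕ) :
    ((p : ℂ) + 1 - k) * hermiteOddCoeff (p + 1) k =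
      -2 * (2 * p + 3) * (p + 1) * hermiteOddCoeff p k := by
  have factorial_ratio : ((2 * (p + 1) + 1)! : ℂ) / (p + 1)! =
      2 * (2 * p + 3) * ((2 * p + 1)! / p !) := by
    rw [show 2 * (p + 1) + 1 = 2 * p + 1 + 1 + 1 by ring, factorial_succ (2 * p + 1 + 1),
      factorial_succ (2 * p + 1), factorial_succ p]
    push_cast
    field_simp
    ring
  calc ((p : ℂ) + 1 - k) * hermiteOddCoeff (p + 1) k
      = (-1) ^ (p + 1 + k) * 2 ^ (2 * k + 1) / (2 * k + 1)! *
          ((2 * (p + 1) + 1)! / (p + 1)!) *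
            (((p : ℂ) + 1 - k) * (p + 1).descFactorial k) := by
        rw [hermiteOddCoeff]
        ring
    _ = -2 * (2 * p + 3) * (p + 1) * hermiteOddCoeff p k := by
        rw [factorial_ratio, cast_succ_sub_mul_descFactorial, hermiteOddCoeff]
        ring

lemma sub_mul_hermiteOddCoeff (p k : ℕ) :
    ((p : ℂ) - k) * hermiteOddCoeff p k =
      -2 * (2 * p + 1) * p * hermiteOddCoeff (p - 1) k := by
  rcases p with _ | p
  · rcases k with _ | k <;> simp [hermiteOddCoeff]
  · have h := succ_sub_mul_hermiteOddCoeff_succ p k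
    rw [Nat.add_sub_cancel]
    push_cast
    linear_combination h

lemma two_mul_cast_add_one_ne_zero {R : Type*} [Semiring R] [CharZero R] (m : ℕ) :
    2 * (m : R) + 1 ≠ 0 := by
  exact_mod_cast (2 * m).succ_ne_zero

lemma hermiteOddCoeff_combination (m k : ℕ) :
    hermiteOddCoeff (m + 1) k + 4 * (2 * m + 3) * hermiteOddCoeff m k +
        4 * (2 * m + 3) * (2 * m) * hermiteOddCoeff (m - 1) k =
      (2 * k ^ 2 - (m + 1)) / ((m + 1) * (2 * m + 1)) * hermiteOddCoeff (m + 1) k := by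
  have h₁ : (m : ℂ) + 1 ≠ 0 := m.cast_add_one_ne_zero
  have h₂ : 2 * (m : ℂ) + 1 ≠ 0 := two_mul_cast_add_one_ne_zero m
  have upper := succ_sub_mul_hermiteOddCoeff_succ m k
  have lower := sub_mul_hermiteOddCoeff m k
  field_simp
  linear_combination 2 * (m + 1 + k) * upper + 4 * (2 * m + 3) * (m + 1) * lower

lemma prod_Icc_two_mul_succ_sub {R : Type*} [CommRing R] (m t : ℕ) :
    ∏ j ∈ Icc 1 t, 2 * ((m : R) + 1 - j) = 2 ^ t * m.descFactorial t := by
  rw [← descPochhammer_eval_eq_descFactorial, descPochhammer_eval_eq_prod_range,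
    prod_mul_distrib, prod_const, card_Icc, Nat.add_sub_cancel,
    ← Ico_add_one_right_eq_Icc, prod_Ico_eq_prod_range, Nat.add_sub_cancel]
  simp [add_comm 1]

lemma M1_two_mul_add_three (m : ℕ) :
    M1 (2 * m + 3) = 2 * (-1) ^ m * (2 * m + 3)! / ((m + 1)! * (2 * m + 1)) := by
  have hm : 2 * (m : ℂ) + 1 ≠ 0 := two_mul_cast_add_one_ne_zero m
  have prod_eq : ∏ j ∈ Icc 1 m, (((2 * m + 3 : ℕ) : ℂ) - 2 * (1 + (j : ℂ)) + 1) =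
      2 ^ m * m ! := by
    rw [← descFactorial_self, ← prod_Icc_two_mul_succ_sub]
    refine prod_congr rfl fun j _ ↦ ?_
    push_cast
    ring
  rw [M1, show (2 * m + 3 + 1) / 2 = m + 2 by lia, show (2 * m + 3 - 3) / 2 = m by lia, prod_eq,
    show ((2 * m + 3 : ℕ) : ℂ) - 1 = 2 * (m + 1) by push_cast; ring,
    show ((2 * m + 3 : ℕ) : ℂ) - 2 = 2 * m + 1 by push_cast; ring, factorial_succ m]
  push_cast
  field_simp
  ring

lemma codd_two_mul_add_three (m k : ℕ) :
    codd (2 * m + 3) (k + 1) =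
      (-1) ^ k * 4 ^ k * (m + 1 - 2 * k ^ 2) * (m + 1).descFactorial k /
        ((m + 1) * (2 * k + 1)!) := by
  have hm : (m : ℂ) + 1 ≠ 0 := m.cast_add_one_ne_zero
  rcases k with _ | k
  · simp [codd, hm]
  · have prod_eq : ∏ j ∈ Icc 1 k, (((2 * m + 3 : ℕ) : ℂ) - (2 * (1 + (j : ℂ)) - 1)) =
        2 ^ k * m.descFactorial k := by
      rw [← prod_Icc_two_mul_succ_sub]
      refine prod_congr rfl fun j _ ↦ ?_
      push_cast
      ring
    rw [codd, if_neg (by lia), show k + 1 + 1 - 2 = k by lia, show k + 1 + 1 - 1 = k + 1 by lia,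
      show 2 * (k + 1 + 1) - 1 = 2 * (k + 1) + 1 by lia, prod_eq, succ_descFactorial_succ,
      show (4 : ℂ) = 2 * 2 by norm_num, mul_pow 2 2]
    push_cast
    field_simp
    ring

lemma M1_mul_codd (m k : ℕ) :
    M1 (2 * m + 3) * codd (2 * m + 3) (k + 1) =
      (2 * k ^ 2 - (m + 1)) / ((m + 1) * (2 * m + 1)) * hermiteOddCoeff (m + 1) k := by
  rw [M1_two_mul_add_three, codd_two_mul_add_three, hermiteOddCoeff, pow_succ 2, pow_mul,
    show 2 * (m + 1) + 1 = 2 * m + 3 by ring]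
  have hm : (m : ℂ) + 1 ≠ 0 := m.cast_add_one_ne_zero
  have hm' : 2 * (m : ℂ) + 1 ≠ 0 := two_mul_cast_add_one_ne_zero m
  field_simp
  ring

-- For `m = 0` the truncated indices `2 * m + 3 - 4` and `m - 1` disagree, but `2 * m` vanishes.
lemma Hhatc_two_mul_add_three (m : ℕ) (z : ℂ) :
    Hhatc (2 * m + 3) z = Hc (2 * (m + 1) + 1) z + 4 * (2 * m + 3) * Hc (2 * m + 1) z +
      4 * (2 * m + 3) * (2 * m) * Hc (2 * (m - 1) + 1) z := by
  rw [Hhatc]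
  rcases m with _ | m
  · simp
  · rw [show 2 * (m + 1) + 3 - 4 = 2 * (m + 1 - 1) + 1 by lia]
    push_cast
    ring_nf

lemma hasSum_M1_mul_codd (m : ℕ) (z : ℂ) :
    HasSum (fun k ↦ M1 (2 * m + 3) * (codd (2 * m + 3) (k + 1) * z ^ (2 * k + 1)))
      (Hhatc (2 * m + 3) z) := by
  rw [Hhatc_two_mul_add_three]
  convert ((hasSum_Hc_odd (m + 1) z).add ((hasSum_Hc_odd m z).mul_left _)).add
    ((hasSum_Hc_odd (m - 1) z).mul_left _) using 2 with k
  rw [← mul_assoc, M1_mul_codd, ← hermiteOddCoeff_combination]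
  ring

theorem stmt12 (n : ℕ) (hodd : Odd n) (hn : 3 ≤ n) (z : ℂ) :
    Hhatc n z = M1 n * nuF n z := by
  obtain ⟨m, rfl⟩ : ∃ m, n = 2 * m + 3 := by
    obtain ⟨a, rfl⟩ := hodd
    exact ⟨a - 1, by lia⟩
  rw [nuF, ← tsum_mul_left, (hasSum_M1_mul_codd m z).tsum_eq]
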